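/- Let X be a separable Banach space and let T : X → X be a hypercyclic bounded linear operator with c(T) > 0. Then there is a comeager set of vectors x ∈ X for which there exists a set D_x ⊆ ℕ with upper density at least c(T) such that ‖T^i x‖ → 0 as i → ∞ along D_x. -/

import Mathlib

open MeasureTheory Filter Topology Set Metric

/-- The upper density of a set of natural numbers:
`limsup_{N→∞} #(A ∩ [1,N]) / N`. -/
noncomputable def upperDensity (A : Set ℕ) : ℝ :=
  Filter.limsup (fun N : ℕ => (Nat.card ↥(A ∩ Set.Icc 1 N) : ℝ) / N) Filter.atTop

/-- `x` is a hypercyclic point for `T`: its orbit is dense. -/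
def HypPt {X : Type*} [TopologicalSpace X] (T : X → X) (x : X) : Prop :=
  Dense (Set.range fun n : ℕ => T^[n] x)

/-- The parameter `c(T)`:
`c(T) = sup_{R>0} sup_{x ∈ HC(T)} upperDensity {n | T^[n] x ∈ B̄(0,R)}`. -/
noncomputable def cConst {X : Type*} [NormedAddCommGroup X] (T : X → X) : ℝ :=
  sSup {c : ℝ | ∃ R : ℝ, 0 < R ∧ ∃ x : X, HypPt T x ∧
    c = upperDensity {n : ℕ | T^[n] x ∈ Metric.closedBall 0 R}}

/-- Good vectors: some long window has many times at which the orbit is `ε`-small. -/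
def GoodSet {X : Type*} [NormedAddCommGroup X] (T : X → X) (c ε : ℝ) (N : ℕ) : Set X :=
  {x | ∃ n : ℕ, N < n ∧ ∃ F : Finset ℕ, F ⊆ Finset.Icc 1 n ∧ c * n < F.card ∧
    ∀ i ∈ F, ‖T^[i] x‖ < ε}

lemma goodSet_isOpen {X : Type*} [NormedAddCommGroup X] (T : X → X) (hT : Continuous T)
    (c ε : ℝ) (N : ℕ) : IsOpen (GoodSet T c ε N) := by
  have : GoodSet T c ε N = ⋃ (n : ℕ) (_ : N < n) (F : Finset ℕ) (_ : F ⊆ Finset.Icc 1 n)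
      (_ : c * n < F.card), ⋂ i ∈ F, {x | ‖T^[i] x‖ < ε} := by
    ext x
    simp only [GoodSet, Set.mem_ofPred_eq, Set.mem_iUnion, Set.mem_iInter, exists_prop]
  rw [this]
  refine isOpen_iUnion fun n => isOpen_iUnion fun _ => isOpen_iUnion fun F =>
    isOpen_iUnion fun _ => isOpen_iUnion fun _ => ?_
  refine isOpen_biInter_finset fun i _ => ?_
  exact isOpen_lt ((hT.iterate i).norm) continuous_const

lemma ratio_bdd (A : Set ℕ) (N : ℕ) :
    (Nat.card ↥(A ∩ Set.Icc 1 N) : ℝ) / N ≤ 1 := by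
  apply div_le_one_of_le₀ _ (Nat.cast_nonneg N)
  have h : (A ∩ Set.Icc 1 N).ncard ≤ (Set.Icc 1 N).ncard :=
    Set.ncard_le_ncard Set.inter_subset_right (Set.finite_Icc 1 N)
  rw [Nat.card_coe_set_eq]
  have h2 : (Set.Icc 1 N).ncard = N := by
    rw [← Finset.coe_Icc, Set.ncard_coe_finset]; simp
  rw [h2] at h
  exact_mod_cast h

lemma goodSet_dense {X : Type*} [NormedAddCommGroup X] [NormedSpace ℝ X]
    (T : X →L[ℝ] X) (hhc : ∃ x : X, HypPt (⇑T) x) (c ε : ℝ) (hcT : c < cConst (⇑T))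
    (hε : 0 < ε) (N : ℕ) : Dense (GoodSet (⇑T) c ε N) := by
  obtain ⟨x0, hx0⟩ := hhc
  obtain ⟨u, ⟨R, hR, y, hy, hu⟩, hcu⟩ := exists_lt_of_lt_csSup
    (by exact ⟨_, 1, one_pos, x0, hx0, rfl⟩) hcT
  obtain ⟨a, hca, hau⟩ := exists_between hcu
  have hδ : 0 < ε / (2 * R) := by positivity
  set δ := ε / (2 * R) with hδd
  have hd : DenseRange fun k : ℕ => δ • (⇑T)^[k] y := by
    have h1 : Function.Surjective (fun x : X => δ • x) := fun x =>
      ⟨δ⁻¹ • x, smul_inv_smul₀ hδ.ne' x⟩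
    exact h1.denseRange.comp hy (continuous_const_smul δ)
  refine Dense.mono ?_ hd
  rintro _ ⟨k, rfl⟩
  rw [hu] at hau
  have hfr := frequently_lt_of_lt_limsup (by
    refine IsCoboundedUnder.of_frequently_ge (a := 0) (Frequently.of_forall fun n => ?_)
    positivity) hau
  obtain ⟨M, hM⟩ := exists_nat_gt ((k : ℝ) / (a - c))
  obtain ⟨n, hn, han⟩ := (frequently_atTop.1 hfr) (max M (N + 1))
  have hnM : M ≤ n := le_trans (le_max_left _ _) hn
  have hnN : N + 1 ≤ n := le_trans (le_max_right _ _) hn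
  have hn0 : (0 : ℝ) < n := by
    have : 0 < n := by omega
    exact_mod_cast this
  rw [lt_div_iff₀ hn0, Nat.card_coe_set_eq] at han
  refine ⟨n, by omega, (Finset.Icc 1 n).filter (fun i => ‖(⇑T)^[i] (δ • (⇑T)^[k] y)‖ < ε),
    Finset.filter_subset _ _, ?_, fun i hi => (Finset.mem_filter.1 hi).2⟩
  set F := (Finset.Icc 1 n).filter (fun i => ‖(⇑T)^[i] (δ • (⇑T)^[k] y)‖ < ε) with hF
  have hsub : {m : ℕ | (⇑T)^[m] y ∈ Metric.closedBall 0 R} ∩ Set.Icc 1 n ⊆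
      ((Finset.Icc 1 k ∪ F.image (fun i => i + k) : Finset ℕ) : Set ℕ) := by
    rintro m ⟨hm, hm1, hm2⟩
    rw [Finset.mem_coe, Finset.mem_union]
    by_cases hmk : m ≤ k
    · left; exact Finset.mem_Icc.2 ⟨hm1, hmk⟩
    · right
      refine Finset.mem_image.2 ⟨m - k, ?_, by omega⟩
      refine Finset.mem_filter.2 ⟨Finset.mem_Icc.2 ⟨by omega, by omega⟩, ?_⟩
      have e : (⇑T)^[m - k] (δ • (⇑T)^[k] y) = δ • (⇑T)^[m] y := by
        have e1 : (⇑T)^[m] y = (⇑T)^[m - k] ((⇑T)^[k] y) := by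
          rw [← Function.iterate_add_apply]; congr 2; omega
        rw [e1]
        have hcom : Function.Commute (⇑T) (fun x : X => δ • x) := fun x => T.map_smul δ x
        exact hcom.iterate_left (m - k) _
      rw [e, norm_smul, Real.norm_of_nonneg hδ.le]
      have hm' : ‖(⇑T)^[m] y‖ ≤ R := by simpa using hm
      calc δ * ‖(⇑T)^[m] y‖ ≤ δ * R := by gcongr
        _ = ε / 2 := by rw [hδd]; field_simp
        _ < ε := by linarith
  have hcard := Set.ncard_le_ncard hsub (Finset.finite_toSet _)
  rw [Set.ncard_coe_finset] at hcard
  have hcard2 : (Finset.Icc 1 k ∪ F.image (fun i => i + k)).card ≤ k + F.card := by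
    refine (Finset.card_union_le _ _).trans ?_
    have := Finset.card_image_le (s := F) (f := fun i => i + k)
    simp only [Nat.card_Icc]
    omega
  have h3 : (({m : ℕ | (⇑T)^[m] y ∈ Metric.closedBall 0 R} ∩ Set.Icc 1 n).ncard : ℝ)
      ≤ k + F.card := by exact_mod_cast hcard.trans hcard2
  have h4 : (k : ℝ) < (a - c) * n := by
    rw [div_lt_iff₀ (by linarith)] at hM
    have : (M : ℝ) ≤ n := by exact_mod_cast hnM
    nlinarith
  nlinarith

lemma exists_D {X : Type*} [NormedAddCommGroup X] (T : X → X) (c : ℝ) (x : X)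
    (hx : ∀ k N : ℕ, x ∈ GoodSet T (c - 1 / ((k : ℝ) + 1)) (1 / ((k : ℝ) + 1)) N) :
    ∃ D : Set ℕ, c ≤ upperDensity D ∧
      Filter.Tendsto (fun i : ℕ => ‖T^[i] x‖)
        (Filter.atTop ⊓ Filter.principal D) (nhds 0) := by
  choose f hf F hF hcard hsm using hx
  obtain ⟨n, hn⟩ : ∃ n : ℕ → ℕ, ∀ k, n (k + 1) = f k ((k + 1) * n k) :=
    ⟨fun k => Nat.rec 0 (fun k m => f k ((k + 1) * m)) k, fun k => rfl⟩
  have hgrow : ∀ k, (k + 1) * n k < n (k + 1) := fun k => by rw [hn]; exact hf _ _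
  have hmono : StrictMono n := strictMono_nat_of_lt_succ fun k => by
    have := hgrow k
    nlinarith [Nat.zero_le (k * n k)]
  refine ⟨{i : ℕ | ∃ k, n k < i ∧ i ≤ n (k + 1) ∧ ‖T^[i] x‖ < 1 / ((k : ℝ) + 1)}, ?_, ?_⟩
  · set D : Set ℕ := {i : ℕ | ∃ k, n k < i ∧ i ≤ n (k + 1) ∧ ‖T^[i] x‖ < 1 / ((k : ℝ) + 1)} with hD
    have key : ∀ k : ℕ, c - 2 / ((k : ℝ) + 1) ≤
        (Nat.card ↥(D ∩ Set.Icc 1 (n (k + 1))) : ℝ) / (n (k + 1) : ℕ) := by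
      intro k
      have hpos : (0 : ℝ) < (n (k + 1) : ℕ) := by
        have : 0 < n (k + 1) := lt_of_le_of_lt (Nat.zero_le _) (hgrow k)
        exact_mod_cast this
      rw [le_div_iff₀ hpos, Nat.card_coe_set_eq]
      set G := F k ((k + 1) * n k) with hG
      have h1 : (G : Set ℕ) ⊆ (D ∩ Set.Icc 1 (n (k + 1))) ∪ (Finset.Icc 1 (n k) : Finset ℕ) := by
        intro i hi
        have hi' := Finset.mem_Icc.1 (hF k ((k + 1) * n k) hi)
        rw [← hn] at hi'
        rcases le_or_gt i (n k) with h | h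
        · right; exact Finset.mem_coe.2 (Finset.mem_Icc.2 ⟨hi'.1, h⟩)
        · left; exact ⟨⟨k, by omega, hi'.2, hsm k _ i hi⟩, hi'⟩
      have h2 := Set.ncard_le_ncard h1
        (((Set.finite_Icc 1 (n (k + 1))).inter_of_right D).union (Finset.finite_toSet _))
      have h3 := h2.trans (Set.ncard_union_le _ _)
      rw [Set.ncard_coe_finset, Set.ncard_coe_finset, Nat.card_Icc, Nat.add_sub_cancel] at h3
      have h4 : (G.card : ℝ) ≤ ((D ∩ Set.Icc 1 (n (k + 1))).ncard : ℝ) + (n k : ℝ) := by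
        exact_mod_cast h3
      have h5 := hcard k ((k + 1) * n k)
      rw [← hn] at h5
      have h6 : ((k : ℝ) + 1) * n k < n (k + 1) := by exact_mod_cast hgrow k
      have hk : (0 : ℝ) < (k : ℝ) + 1 := by positivity
      have h7 : (n k : ℝ) ≤ 1 / ((k : ℝ) + 1) * n (k + 1) := by
        rw [one_div, inv_mul_eq_div, le_div_iff₀ hk]; linarith
      have h8 : 2 / ((k : ℝ) + 1) = 2 * (1 / ((k : ℝ) + 1)) := by ring
      rw [h8]
      nlinarith
    refine le_of_forall_lt fun b hb => ?_
    obtain ⟨b', hb1, hb2⟩ := exists_between hb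
    refine lt_of_lt_of_le hb1 ?_
    refine le_limsup_of_frequently_le ?_ (isBoundedUnder_of ⟨1, ratio_bdd D⟩)
    rw [frequently_atTop]
    intro N
    obtain ⟨K, hK⟩ := exists_nat_gt (2 / (c - b'))
    refine ⟨n (max K N + 1), ?_, le_trans ?_ (key (max K N))⟩
    · have := hmono.id_le (max K N + 1)
      have := le_max_right K N
      simp only [id] at *
      omega
    · have hKm : (K : ℝ) ≤ (max K N : ℕ) := by exact_mod_cast le_max_left K N
      rw [div_lt_iff₀ (by linarith)] at hK
      have : 2 / (((max K N : ℕ) : ℝ) + 1) ≤ c - b' := by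
        rw [div_le_iff₀ (by positivity)]
        nlinarith
      linarith
  · rw [Metric.tendsto_nhds]
    intro ε hε
    obtain ⟨K, hK⟩ := exists_nat_one_div_lt hε
    rw [eventually_inf_principal]
    filter_upwards [eventually_gt_atTop (n K)] with i hi
    rintro ⟨k, hk1, hk2, hk3⟩
    have hKk : K ≤ k := by
      by_contra h
      have := hmono.monotone (show k + 1 ≤ K by omega)
      omega
    simp only [dist_zero_right, norm_norm]
    refine lt_of_lt_of_le hk3 (le_trans ?_ hK.le)
    have : (K : ℝ) ≤ k := by exact_mod_cast hKk
    gcongr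

/-- Let `X` be a separable Banach space and `T` a hypercyclic bounded
linear operator on `X` with `c(T) > 0`. Then there is a comeager set of vectors `x ∈ X`
for which there exists a set `D_x ⊆ ℕ` with upper density at least `c(T)` such that
`‖T^i x‖ → 0` as `i → ∞` along `D_x`. -/
theorem stmt7 {X : Type*} [NormedAddCommGroup X] [NormedSpace ℝ X] [CompleteSpace X]
    [TopologicalSpace.SeparableSpace X] [MeasurableSpace X] [BorelSpace X]
    (T : X →L[ℝ] X) (hhc : ∃ x : X, HypPt (⇑T) x) (hc : 0 < cConst (⇑T)) :
    {x : X | ∃ D : Set ℕ, cConst (⇑T) ≤ upperDensity D ∧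
      Filter.Tendsto (fun i : ℕ => ‖(⇑T)^[i] x‖)
        (Filter.atTop ⊓ Filter.principal D) (nhds 0)} ∈ residual X := by
  have h : (⋂ (k : ℕ) (N : ℕ), GoodSet (⇑T) (cConst (⇑T) - 1 / ((k : ℝ) + 1))
      (1 / ((k : ℝ) + 1)) N) ∈ residual X := by
    refine countable_iInter_mem.2 fun k => countable_iInter_mem.2 fun N => ?_
    have hk : (0 : ℝ) < 1 / ((k : ℝ) + 1) := by positivity
    exact residual_of_dense_open (goodSet_isOpen _ T.continuous _ _ _)
      (goodSet_dense T hhc _ _ (by linarith) hk N)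
  refine Filter.mem_of_superset h fun x hx => ?_
  simp only [Set.mem_iInter] at hx
  exact exists_D _ _ x hx
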